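/- Let (N, 𝔖) be a regular set system with |N| = n ≥ 1, let v, u be capacities on 𝔖 with v ≢ u such that for every maximal chain C ∈ 𝒞(𝔖) and every i, p^{u,C}_i > 0, and for 0 < λ < 1 define v^u_λ := λu + (1 − λ)v. Then λ ↦ H(v^u_λ; u) is strictly decreasing on (0, 1). -/

import Mathlib

open Finset

variable {α : Type*} [DecidableEq α] [Fintype α]

/-- `c = (c 0, …, c m)` is a maximal chain of the set system `S`:
`∅ = c 0 ⊊ c 1 ⊊ ⋯ ⊊ c m = N`, each `c i ∈ S`, and no element of `S` lies strictly
between consecutive elements. Its length is `m`. -/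
def IsMaxChainOf (S : Finset (Finset α)) (m : ℕ) (c : Fin (m + 1) → Finset α) : Prop :=
  c 0 = ∅ ∧ c (Fin.last m) = Finset.univ ∧ (∀ i, c i ∈ S) ∧
    (∀ i : Fin m, c i.castSucc ⊂ c i.succ) ∧
    (∀ i : Fin m, ∀ x ∈ S, ¬(c i.castSucc ⊂ x ∧ x ⊂ c i.succ))

/-- `(N, S)` is a regular set system: `∅, N ∈ S` and every maximal chain has length `|N|`. -/
def IsRegularSetSystem (S : Finset (Finset α)) : Prop :=
  ∅ ∈ S ∧ Finset.univ ∈ S ∧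
    ∀ (m : ℕ) (c : Fin (m + 1) → Finset α), IsMaxChainOf S m c → m = Fintype.card α

/-- A capacity on the set system `S`: a `[0,1]`-valued, monotone set function
with `v ∅ = 0` and `v N = 1`. -/
def IsCapacity (S : Finset (Finset α)) (v : Finset α → ℝ) : Prop :=
  v ∅ = 0 ∧ v Finset.univ = 1 ∧ (∀ A ∈ S, 0 ≤ v A ∧ v A ≤ 1) ∧
    ∀ A ∈ S, ∀ B ∈ S, A ⊆ B → v A ≤ v B

/-- `h(x) = -x log₂ x` (with the convention `0 log 0 = 0`, satisfied by `Real.logb`). -/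
noncomputable def hfun (x : ℝ) : ℝ := -(x * Real.logb 2 x)

/-- Shannon entropy of a probability distribution. -/
noncomputable def shannonEntropy {m : ℕ} (p : Fin m → ℝ) : ℝ := ∑ i, hfun (p i)

/-- The increment distribution `p^{v,C}` along a chain `c`. -/
def chainDist (v : Finset α → ℝ) {m : ℕ} (c : Fin (m + 1) → Finset α) : Fin m → ℝ :=
  fun i => v (c i.succ) - v (c i.castSucc)

/-- The maximal chains of `S` (of length `|N|`; in a regular set system these are
all the maximal chains). -/
noncomputable def maxChains (S : Finset (Finset α)) :
    Finset (Fin (Fintype.card α + 1) → Finset α) :=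
  @Finset.filter _ (fun c => IsMaxChainOf S (Fintype.card α) c) (Classical.decPred _)
    Finset.univ

/-- The entropy `H(v)` of a capacity `v` on a regular set system. -/
noncomputable def capEntropy (S : Finset (Finset α)) (v : Finset α → ℝ) : ℝ :=
  (1 / ((maxChains S).card : ℝ)) * ∑ c ∈ maxChains S, shannonEntropy (chainDist v c)

/-- Shannon relative entropy `H_S(p; q) = Σ p_i log₂ (p_i/q_i)`. -/
noncomputable def relEntropyFun {m : ℕ} (p q : Fin m → ℝ) : ℝ :=
  ∑ i, p i * Real.logb 2 (p i / q i)

/-- The relative entropy `H(v; u)` of capacities on a regular set system. -/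
noncomputable def capRelEntropy (S : Finset (Finset α)) (v u : Finset α → ℝ) : ℝ :=
  (1 / ((maxChains S).card : ℝ)) *
    ∑ c ∈ maxChains S, relEntropyFun (chainDist v c) (chainDist u c)

/-!
Relative entropy is convex in its first argument, hence so is `v ↦ H(v; u)`. By Gibbs' inequality it
is nonnegative, and it is positive as soon as `v` and `u` induce different distributions along some
maximal chain; this happens when they differ at some `A ∈ 𝔖`, because every member of `𝔖` lies on a
maximal chain. So on the segment from `v` to `u` it is a convex function whose strict minimum is
attained only at the endpoint `u`, and such a function is strictly decreasing.
-/

open InformationTheory (klFun klFun_apply klFun_nonneg klFun_eq_zero_iff)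

theorem convexOn_finsetSum {𝕜 E β ι : Type*} [Semiring 𝕜] [PartialOrder 𝕜] [AddCommMonoid E]
    [SMul 𝕜 E] [AddCommMonoid β] [PartialOrder β] [IsOrderedAddMonoid β] [Module 𝕜 β] {s : Set E}
    (hs : Convex 𝕜 s) {f : ι → E → β} {t : Finset ι} (hf : ∀ i ∈ t, ConvexOn 𝕜 s (f i)) :
    ConvexOn 𝕜 s fun x => ∑ i ∈ t, f i x := by
  simp only [← Finset.sum_apply]
  exact Finset.sum_induction f (ConvexOn 𝕜 s) (fun _ _ => ConvexOn.add) (convexOn_const 0 hs) hf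

theorem strictAntiOn_Icc_of_convexOn {𝕜 β : Type*} [Field 𝕜] [LinearOrder 𝕜] [IsStrictOrderedRing 𝕜]
    [AddCommMonoid β] [LinearOrder β] [IsOrderedCancelAddMonoid β] [Module 𝕜 β]
    [PosSMulStrictMono 𝕜 β] {f : 𝕜 → β} {a b : 𝕜} (hf : ConvexOn 𝕜 (Set.Icc a b) f)
    (hmin : ∀ x ∈ Set.Ico a b, f b < f x) : StrictAntiOn f (Set.Icc a b) := by
  intro x hx y hy hxy
  rcases hy.2.eq_or_lt with rfl | hyb
  · exact hmin x ⟨hx.1, hxy⟩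
  · have hy_mem : y ∈ openSegment 𝕜 x b := by
      rw [openSegment_eq_Ioo (hxy.trans hyb)]
      exact ⟨hxy, hyb⟩
    exact hf.lt_left_of_right_lt hx ⟨hx.1.trans hx.2, le_rfl⟩ hy_mem (hmin y ⟨hy.1, hyb⟩)

section RelEntropyFun

variable {m : ℕ} {p q : Fin m → ℝ}

theorem relEntropyFun_self (p : Fin m → ℝ) : relEntropyFun p p = 0 := by
  refine Finset.sum_eq_zero fun i _ => ?_
  rcases eq_or_ne (p i) 0 with h | h
  · rw [h, zero_mul]
  · rw [div_self h, Real.logb_one, mul_zero]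

theorem convexOn_mul_logb_div {b y : ℝ} (hb : 1 ≤ b) (hy : y ≠ 0) :
    ConvexOn ℝ (Set.Ici 0) fun x => x * Real.logb b (x / y) := by
  have hconv : ConvexOn ℝ (Set.Ici 0)
      fun x => (Real.log b)⁻¹ * (x * Real.log x + (-Real.log y) * x) :=
    (Real.convexOn_mul_log.add
      ((LinearMap.lsmul ℝ ℝ (-Real.log y)).convexOn (convex_Ici 0))).smul
      (inv_nonneg.mpr (Real.log_nonneg hb))
  refine hconv.congr fun x _ => ?_
  rcases eq_or_ne x 0 with rfl | hx
  · simp only [Real.log_zero, zero_mul, mul_zero, add_zero]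
  · rw [Real.logb, Real.log_div hx hy]
    ring

theorem convexOn_relEntropyFun (hq : ∀ i, q i ≠ 0) :
    ConvexOn ℝ (Set.Ici 0) fun p : Fin m → ℝ => relEntropyFun p q := by
  refine convexOn_finsetSum (convex_Ici 0) fun i _ => ?_
  let coord : (Fin m → ℝ) →ₗ[ℝ] ℝ := LinearMap.proj i
  exact ((convexOn_mul_logb_div one_le_two (hq i)).comp_linearMap coord).subset
    (fun p hp => hp i) (convex_Ici 0)

theorem relEntropyFun_eq_sum_klFun (hq : ∀ i, q i ≠ 0) (hpq : ∑ i, p i = ∑ i, q i) :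
    relEntropyFun p q = (∑ i, q i * klFun (p i / q i)) / Real.log 2 := by
  have hterm (i : Fin m) :
      q i * klFun (p i / q i) = p i * Real.log (p i / q i) + (q i - p i) := by
    rw [klFun_apply]
    linear_combination (Real.log (p i / q i) - 1) * mul_div_cancel₀ (p i) (hq i)
  calc relEntropyFun p q = (∑ i, p i * Real.log (p i / q i)) / Real.log 2 := by
        simp only [relEntropyFun, Real.logb, Finset.sum_div, mul_div_assoc]
    _ = (∑ i, q i * klFun (p i / q i)) / Real.log 2 := by
        simp only [hterm, Finset.sum_add_distrib, Finset.sum_sub_distrib, hpq, sub_self, add_zero]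

theorem relEntropyFun_pos (hp : 0 ≤ p) (hq : ∀ i, 0 < q i) (hpq : ∑ i, p i = ∑ i, q i)
    (hne : p ≠ q) : 0 < relEntropyFun p q := by
  have hratio (i : Fin m) : 0 ≤ p i / q i := div_nonneg (hp i) (hq i).le
  obtain ⟨i, hi⟩ := Function.ne_iff.mp hne
  have hkl : 0 < klFun (p i / q i) :=
    (klFun_nonneg (hratio i)).lt_of_ne' fun h =>
      hi (eq_of_div_eq_one ((klFun_eq_zero_iff (hratio i)).mp h))
  rw [relEntropyFun_eq_sum_klFun (fun i => (hq i).ne') hpq]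
  refine div_pos ?_ (Real.log_pos one_lt_two)
  exact Finset.sum_pos' (fun j _ => mul_nonneg (hq j).le (klFun_nonneg (hratio j)))
    ⟨i, Finset.mem_univ i, mul_pos (hq i) hkl⟩

theorem relEntropyFun_nonneg (hp : 0 ≤ p) (hq : ∀ i, 0 < q i) (hpq : ∑ i, p i = ∑ i, q i) :
    0 ≤ relEntropyFun p q := by
  rcases eq_or_ne p q with rfl | hne
  · exact (relEntropyFun_self p).ge
  · exact (relEntropyFun_pos hp hq hpq hne).le

end RelEntropyFun

section ChainDist

variable {β : Type*} {v u : Finset β → ℝ} {m : ℕ} {c : Fin (m + 1) → Finset β}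

theorem isLinearMap_chainDist (c : Fin (m + 1) → Finset β) :
    IsLinearMap ℝ fun v : Finset β → ℝ => chainDist v c where
  map_add v w := by
    ext i
    simp only [chainDist, Pi.add_apply]
    ring
  map_smul r v := by
    ext i
    simp only [chainDist, Pi.smul_apply, smul_eq_mul]
    ring

theorem sum_chainDist (v : Finset β → ℝ) (c : Fin (m + 1) → Finset β) :
    ∑ i, chainDist v c i = v (c (Fin.last m)) - v (c 0) := by
  have hsucc := Fin.sum_univ_succ fun i => v (c i)
  have hcastSucc := Fin.sum_univ_castSucc fun i => v (c i)
  simp only [chainDist, Finset.sum_sub_distrib]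
  linarith

theorem eq_on_chain_of_chainDist_eq (h₀ : v (c 0) = u (c 0)) (h : chainDist v c = chainDist u c)
    (k : Fin (m + 1)) : v (c k) = u (c k) := by
  induction k using Fin.induction with
  | zero => exact h₀
  | succ i ih =>
    have hi : v (c i.succ) - v (c i.castSucc) = u (c i.succ) - u (c i.castSucc) := congrFun h i
    linarith

end ChainDist

section MaxChains

variable {β : Type*} [Fintype β] {S : Finset (Finset β)} {A : Finset β} {v u : Finset β → ℝ}
  {m : ℕ} {c : Fin (m + 1) → Finset β}

theorem IsMaxChainOf.chainDist_nonneg (hc : IsMaxChainOf S m c)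
    (hv : MonotoneOn v (S : Set (Finset β))) : 0 ≤ chainDist v c := fun i =>
  sub_nonneg.mpr (hv (hc.2.2.1 _) (hc.2.2.1 _) (hc.2.2.2.1 i).subset)

theorem IsMaxChainOf.sum_chainDist_eq (hc : IsMaxChainOf S m c) (h_empty : v ∅ = u ∅)
    (h_univ : v univ = u univ) : ∑ i, chainDist v c i = ∑ i, chainDist u c i := by
  rw [sum_chainDist, sum_chainDist, hc.1, hc.2.1, h_empty, h_univ]

theorem mem_maxChains {c : Fin (Fintype.card β + 1) → Finset β} :
    c ∈ maxChains S ↔ IsMaxChainOf S (Fintype.card β) c := by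
  simp only [maxChains, Finset.mem_filter, Finset.mem_univ, true_and]

theorem exists_isMaxChainOf_through (h_empty : ∅ ∈ S) (h_univ : univ ∈ S) (hA : A ∈ S) :
    ∃ (m : ℕ) (c : Fin (m + 1) → Finset β), IsMaxChainOf S m c ∧ ∃ k, c k = A := by
  let _ : BoundedOrder {B // B ∈ S} := Subtype.boundedOrder h_empty h_univ
  obtain ⟨t, ι, htι, h_head, h_last⟩ :=
    LTSeries.exists_relSeries_covBy_and_head_eq_bot_and_last_eq_bot
      (RelSeries.singleton _ (⟨A, hA⟩ : {B // B ∈ S}))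
  refine ⟨t.length, fun i => t i, ⟨congrArg Subtype.val h_head, congrArg Subtype.val h_last,
    fun i => (t i).2, fun i => (t.step i).1, fun i B hB hlt => ?_⟩,
    ι 0, congrArg Subtype.val (congrFun htι 0)⟩
  exact (t.step i).2 (c := ⟨B, hB⟩) hlt.1 hlt.2

theorem IsRegularSetSystem.exists_mem_maxChains_through (hS : IsRegularSetSystem S) (hA : A ∈ S) :
    ∃ c ∈ maxChains S, ∃ k, c k = A := by
  obtain ⟨h_empty, h_univ, h_length⟩ := hS
  obtain ⟨m, c, hc, hA_mem⟩ := exists_isMaxChainOf_through h_empty h_univ hA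
  obtain rfl := h_length m c hc
  exact ⟨c, mem_maxChains.mpr hc, hA_mem⟩

end MaxChains

section CapRelEntropy

variable {β : Type*} [Fintype β] {S : Finset (Finset β)} {v u : Finset β → ℝ}

theorem capRelEntropy_self (S : Finset (Finset β)) (u : Finset β → ℝ) :
    capRelEntropy S u u = 0 := by
  simp only [capRelEntropy, relEntropyFun_self, Finset.sum_const_zero, mul_zero]

theorem convex_setOf_chainDist_nonneg (S : Finset (Finset β)) :
    Convex ℝ {v : Finset β → ℝ | ∀ c ∈ maxChains S, 0 ≤ chainDist v c} := by
  simp only [Set.ofPred_forall]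
  exact convex_iInter₂ fun c _ => (convex_Ici 0).is_linear_preimage (isLinearMap_chainDist c)

theorem convexOn_capRelEntropy (hu : ∀ c ∈ maxChains S, ∀ i, chainDist u c i ≠ 0) :
    ConvexOn ℝ {v | ∀ c ∈ maxChains S, 0 ≤ chainDist v c} fun v => capRelEntropy S v u := by
  have hconv := convex_setOf_chainDist_nonneg S
  refine (convexOn_finsetSum hconv fun c hc => ?_).smul (by positivity)
  exact ((convexOn_relEntropyFun (hu c hc)).comp_linearMap (isLinearMap_chainDist c).mk').subset
    (fun v hv => hv c hc) hconv

theorem capRelEntropy_pos (hS : IsRegularSetSystem S) (h_empty : v ∅ = u ∅)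
    (h_univ : v univ = u univ) (hv : ∀ c ∈ maxChains S, 0 ≤ chainDist v c)
    (hu : ∀ c ∈ maxChains S, ∀ i, 0 < chainDist u c i) (hne : ∃ A ∈ S, v A ≠ u A) :
    0 < capRelEntropy S v u := by
  obtain ⟨A, hA, hvuA⟩ := hne
  obtain ⟨c, hc, k, rfl⟩ := hS.exists_mem_maxChains_through hA
  have h_sum {d} (hd : d ∈ maxChains S) : ∑ i, chainDist v d i = ∑ i, chainDist u d i :=
    (mem_maxChains.mp hd).sum_chainDist_eq h_empty h_univ
  have h_dist : chainDist v c ≠ chainDist u c := fun h =>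
    hvuA (eq_on_chain_of_chainDist_eq (by rw [(mem_maxChains.mp hc).1, h_empty]) h k)
  refine mul_pos (one_div_pos.mpr (Nat.cast_pos.mpr (Finset.card_pos.mpr ⟨c, hc⟩))) ?_
  exact Finset.sum_pos' (fun d hd => relEntropyFun_nonneg (hv d hd) (hu d hd) (h_sum hd))
    ⟨c, hc, relEntropyFun_pos (hv c hc) (hu c hc) (h_sum hc) h_dist⟩

theorem capRelEntropy_strictAnti_toward_u_general (hS : IsRegularSetSystem S)
    (hv : MonotoneOn v (S : Set (Finset β))) (h_empty : v ∅ = u ∅) (h_univ : v univ = u univ)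
    (hne : ∃ A ∈ S, v A ≠ u A)
    (hupos : ∀ c ∈ maxChains S, ∀ i, 0 < chainDist u c i) :
    StrictAntiOn (fun l : ℝ => capRelEntropy S (fun A => l * u A + (1 - l) * v A) u)
      (Set.Icc 0 1) := by
  let w : ℝ →ᵃ[ℝ] (Finset β → ℝ) := AffineMap.lineMap v u
  have hw (l : ℝ) (A : Finset β) : w l A = l * u A + (1 - l) * v A := by
    simp only [w, AffineMap.lineMap_apply_module, Pi.add_apply, Pi.smul_apply, smul_eq_mul]
    ring
  have hw_nonneg : ∀ l ∈ Set.Icc (0 : ℝ) 1, ∀ c ∈ maxChains S, 0 ≤ chainDist (w l) c := fun l hl =>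
    (convex_setOf_chainDist_nonneg S).lineMap_mem
      (fun c hc => (mem_maxChains.mp hc).chainDist_nonneg hv) (fun c hc i => (hupos c hc i).le) hl
  simp only [← hw]
  refine strictAntiOn_Icc_of_convexOn (((convexOn_capRelEntropy fun c hc i =>
    (hupos c hc i).ne').comp_affineMap w).subset hw_nonneg (convex_Icc 0 1)) fun l hl => ?_
  rw [show w 1 = u from AffineMap.lineMap_apply_one v u, capRelEntropy_self]
  refine capRelEntropy_pos hS ?_ ?_ (hw_nonneg l (Set.Ico_subset_Icc_self hl)) hupos ?_
  · rw [hw, h_empty]; ring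
  · rw [hw, h_univ]; ring
  · obtain ⟨A, hA, hvuA⟩ := hne
    refine ⟨A, hA, fun h => hvuA ?_⟩
    rw [hw] at h
    exact mul_left_cancel₀ (sub_pos.mpr hl.2).ne' (by linear_combination h)

end CapRelEntropy

/-- for capacities `v ≢ u` on a regular set system (with positive
increments of `u` along every maximal chain), the relative entropy of
`v^u_λ := λ u + (1 - λ) v` to `u` is strictly decreasing in `λ` on `(0, 1)`. -/
theorem capRelEntropy_strictAnti_toward_u (S : Finset (Finset α))
    (hS : IsRegularSetSystem S) (hn : 1 ≤ Fintype.card α)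
    (v u : Finset α → ℝ) (hv : IsCapacity S v) (hu : IsCapacity S u)
    (hne : ∃ A ∈ S, v A ≠ u A)
    (hupos : ∀ c ∈ maxChains S, ∀ i : Fin (Fintype.card α), 0 < chainDist u c i)
    (lam₁ lam₂ : ℝ) (h₁ : 0 < lam₁) (h₁₂ : lam₁ < lam₂) (h₂ : lam₂ < 1) :
    capRelEntropy S (fun A => lam₂ * u A + (1 - lam₂) * v A) u
      < capRelEntropy S (fun A => lam₁ * u A + (1 - lam₁) * v A) u :=
  capRelEntropy_strictAnti_toward_u_general hS (fun A hA B hB => hv.2.2.2 A hA B hB)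
    (hv.1.trans hu.1.symm) (hv.2.1.trans hu.2.1.symm) hne hupos
    ⟨h₁.le, (h₁₂.trans h₂).le⟩ ⟨(h₁.trans h₁₂).le, h₂.le⟩ h₁₂
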